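/- Let G be a finite group, N a normal subgroup, χ ∈ Irr(G), and ψ ∈ Irr(N) a constituent of the restriction of χ to N. Then χ(1)/ψ(1) divides the index [G : N]. -/

import Mathlib

open scoped Classical

/-!
Let `M = Hom_N(W, V)` be the multiplicity space of `W` in `V`, and `T` the inertia group of `W`. The
group of pairs of an element `g` of `T` and an isomorphism of `W` with its conjugate by `g` acts on
`M`. The conjugates of `W` by representatives of `G ⧸ T` are pairwise non-isomorphic and have
multiplicity `dim M` in `V`, hence `[G : T] * dim M * dim W ≤ dim V`. Conversely, the images of the
maps in a nonzero invariant `X ≤ M` span a `T`-invariant subspace of `V` of dimension at most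
`dim X * dim W`, whose translates span `V`, hence `dim V ≤ [G : T] * dim X * dim W`. So `M` is
irreducible and `dim V = [G : T] * dim M * dim W`.

Elements lying over `N` act on `M` by scalars, by Schur's lemma, and it remains to see that the
dimension of an irreducible representation `ρ` of a group `H` divides the index of any subgroup `K`
acting by scalars. For finite `H` with character `χ`, the summand `χ(h⁻¹) ρ(h)` of the scalar
`∑ h, χ(h⁻¹) ρ(h) = |H| / dim ρ` depends only on the coset of `h` modulo `K`. The sum over cosets is
therefore the scalar `[H : K] / dim ρ`, which is an algebraic integer because the group ring of `H`
over the algebraic integers is integral over them. The general case reduces to this one by rescaling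
the operators `ρ(h)` to determinant one.
-/

section

open Module Representation

section Diagonalization

theorem exists_basis_eigenvectors_of_pow_eq_one {k V : Type*} [Field k] [IsAlgClosed k]
    [AddCommGroup V] [Module k V] [FiniteDimensional k V] {f : End k V} {m : ℕ}
    (hm : (m : k) ≠ 0) (hf : f ^ m = 1) :
    ∃ (b : Basis (Fin (finrank k V)) k V) (μ : Fin (finrank k V) → k),
      ∀ i, f (b i) = μ i • b i ∧ μ i ^ m = 1 := by
  have semisimple : f.IsSemisimple :=
    End.isSemisimple_of_squarefree_aeval_eq_zero (p := (Polynomial.X ^ m - 1 : Polynomial k))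
      (Polynomial.X_pow_sub_one_separable_iff.2 hm).squarefree (by simp [hf])
  have internal : DirectSum.IsInternal fun μ : k ↦ f.eigenspace μ :=
    DirectSum.isInternal_submodule_of_iSupIndep_of_iSup_eq_top f.eigenspaces_iSupIndep
      semisimple.iSup_eigenspace_eq_top
  let b := internal.collectedBasis fun μ ↦ finBasis k (f.eigenspace μ)
  have := Finite.finite_basis b
  have := Fintype.ofFinite (Σ μ : k, Fin (finrank k (f.eigenspace μ)))
  let e := Fintype.equivFinOfCardEq (finrank_eq_card_basis b).symm
  have eigenvector (i) : f.HasEigenvector (e.symm i).1 (b.reindex e i) :=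
    ⟨by rw [b.reindex_apply]; exact internal.collectedBasis_mem _ _, (b.reindex e).ne_zero i⟩
  refine ⟨b.reindex e, fun i ↦ (e.symm i).1, fun i ↦ ⟨(eigenvector i).apply_eq_smul, ?_⟩⟩
  have pow_smul_eq := (eigenvector i).pow_apply m
  rw [hf, End.one_apply] at pow_smul_eq
  exact smul_left_injective k (eigenvector i).2 (by simpa using pow_smul_eq.symm)

theorem trace_eq_sum_of_basis_eigenvectors {ι R V : Type*} [Fintype ι] [CommRing R]
    [AddCommGroup V] [Module R V] {f : End R V} (b : Basis ι R V) {μ : ι → R}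
    (h : ∀ i, f (b i) = μ i • b i) : LinearMap.trace R V f = ∑ i, μ i := by
  simp [LinearMap.trace_eq_matrix_trace R b, Matrix.trace, LinearMap.toMatrix_apply, h]

theorem isIntegral_character {k G V : Type*} [Field k] [IsAlgClosed k] [CharZero k] [Monoid G]
    [AddCommGroup V] [Module k V] [FiniteDimensional k V] (ρ : Representation k G V) {g : G}
    (hg : IsOfFinOrder g) : IsIntegral ℤ (ρ.character g) := by
  obtain ⟨b, μ, hμ⟩ := exists_basis_eigenvectors_of_pow_eq_one (f := ρ g)
    (Nat.cast_ne_zero.2 hg.orderOf_pos.ne') (by rw [← map_pow, pow_orderOf_eq_one, map_one])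
  rw [character, trace_eq_sum_of_basis_eigenvectors b fun i ↦ (hμ i).1]
  exact IsIntegral.sum _ fun i _ ↦ .of_pow hg.orderOf_pos ((hμ i).2 ▸ isIntegral_one)

theorem conj_character {G V : Type*} [Group G] [AddCommGroup V] [Module ℂ V]
    [FiniteDimensional ℂ V] (ρ : Representation ℂ G V) {g : G} (hg : IsOfFinOrder g) :
    starRingEnd ℂ (ρ.character g) = ρ.character g⁻¹ := by
  obtain ⟨b, μ, hμ⟩ := exists_basis_eigenvectors_of_pow_eq_one (f := ρ g)
    (Nat.cast_ne_zero.2 hg.orderOf_pos.ne') (by rw [← map_pow, pow_orderOf_eq_one, map_one])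
  have conj_eq_inv (i) : starRingEnd ℂ (μ i) = (μ i)⁻¹ := by
    rw [Complex.inv_eq_conj (Complex.norm_eq_one_of_pow_eq_one (hμ i).2 hg.orderOf_pos.ne')]
  have eigenvector_inv (i) : ρ g⁻¹ (b i) = (μ i)⁻¹ • b i := by
    have ne_zero : μ i ≠ 0 := (IsUnit.of_pow_eq_one (hμ i).2 hg.orderOf_pos.ne').ne_zero
    rw [eq_inv_smul_iff₀ ne_zero, ← map_smul, ← (hμ i).1, inv_self_apply]
  rw [character, character, trace_eq_sum_of_basis_eigenvectors b fun i ↦ (hμ i).1,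
    trace_eq_sum_of_basis_eigenvectors b eigenvector_inv, map_sum]
  simp only [conj_eq_inv]

end Diagonalization

section Irreducible

variable {k G H V : Type*} [Field k] [AddCommGroup V] [Module k V]

theorem nontrivial_of_isIrreducible [Monoid G] (ρ : Representation k G V) [IsIrreducible ρ] :
    Nontrivial V := by
  by_contra hn
  rw [not_nontrivial_iff_subsingleton] at hn
  exact bot_ne_top (α := Subrepresentation ρ)
    (Subrepresentation.toSubmodule_injective (Subsingleton.elim _ _))

theorem isIrreducible_iff_forall_invariant [Monoid G] [Nontrivial V] {ρ : Representation k G V} :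
    IsIrreducible ρ ↔
      ∀ X : Submodule k V, (∀ g, ∀ v ∈ X, ρ g v ∈ X) → X ≠ ⊥ → X = ⊤ := by
  constructor
  · intro h X invariant ne_bot
    obtain h | h := eq_bot_or_eq_top (⟨X, fun g v ↦ invariant g v⟩ : Subrepresentation ρ)
    · exact absurd (congrArg Subrepresentation.toSubmodule h) ne_bot
    · exact congrArg Subrepresentation.toSubmodule h
  · refine fun h ↦ { exists_pair_ne := ⟨⊥, ⊤, fun eq ↦ ?_⟩, eq_bot_or_eq_top := fun X ↦ ?_ }
    · exact bot_ne_top (α := Submodule k V) (congrArg Subrepresentation.toSubmodule eq)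
    · refine or_iff_not_imp_left.2 fun ne_bot ↦ Subrepresentation.toSubmodule_injective ?_
      exact h X.toSubmodule (fun g v hv ↦ X.apply_mem_toSubmodule g hv)
        fun eq ↦ ne_bot (Subrepresentation.toSubmodule_injective eq)

theorem isIrreducible_of_forall_eq_smul [Monoid G] [Monoid H] (ρ : Representation k G V)
    [IsIrreducible ρ] {τ : Representation k H V} (h : ∀ g, ∃ (c : k) (x : H), ρ g = c • τ x) :
    IsIrreducible τ := by
  have := nontrivial_of_isIrreducible ρ
  refine isIrreducible_iff_forall_invariant.2 fun X invariant ↦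
    isIrreducible_iff_forall_invariant.1 ‹IsIrreducible ρ› X fun g v hv ↦ ?_
  obtain ⟨c, x, hcx⟩ := h g
  rw [hcx]
  exact X.smul_mem c (invariant x v hv)

theorem exists_eq_smul_of_commute [IsAlgClosed k] [FiniteDimensional k V] [Monoid G]
    (ρ : Representation k G V) [IsIrreducible ρ] {f : End k V} (hf : ∀ g, Commute f (ρ g)) :
    ∃ c : k, f = c • 1 := by
  obtain ⟨c, hc⟩ := IsIrreducible.algebraMap_intertwiningMap_bijective_of_isAlgClosed.2
    (⟨f, hf⟩ : IntertwiningMap ρ ρ)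
  exact ⟨c, congrArg IntertwiningMap.toLinearMap hc.symm⟩

end Irreducible

section UnimodularCover

variable {k G V : Type*} [CommRing k] [Group G] [AddCommGroup V] [Module k V]

/-- The representation of `G × kˣ` by the scalar multiples of the operators of `ρ`. -/
def scaledRep (ρ : Representation k G V) : Representation k (G × kˣ) V where
  toFun p := (p.2 : k) • ρ p.1
  map_one' := by simp
  map_mul' p q := by simp [smul_smul, mul_comm]

/-- The pairs `(g, c)` such that `c • ρ g` has determinant one. Passing from `G` to this group
makes the operators that act by scalars roots of unity. -/
noncomputable def unimodularCover (ρ : Representation k G V) : Subgroup (G × kˣ) :=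
  (LinearMap.det.comp (scaledRep ρ)).ker

end UnimodularCover

section ScalarSubgroup

theorem natCast_dvd_of_isIntegral_of_mul_eq {k : Type*} [Field k] [CharZero k] {c : k} {a b : ℕ}
    (hc : IsIntegral ℤ c) (h : c * b = a) : b ∣ a := by
  obtain rfl | hb := eq_or_ne b 0
  · simpa using h.symm
  have c_eq : c = algebraMap ℚ k (a / b) := by
    rw [map_div₀, map_natCast, map_natCast, eq_div_iff (Nat.cast_ne_zero.2 hb), h]
  rw [c_eq, isIntegral_algebraMap_iff (algebraMap ℚ k).injective,
    IsIntegrallyClosed.isIntegral_iff] at hc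
  obtain ⟨z, hz⟩ := hc
  rw [eq_div_iff (Nat.cast_ne_zero.2 hb), eq_intCast] at hz
  exact Int.natCast_dvd_natCast.1 ⟨z, by rw [mul_comm]; exact_mod_cast hz.symm⟩

theorem isIntegral_of_algebraMap_eq_sum_smul {k A G ι : Type*} [Field k] [Ring A] [Algebra k A]
    [Nontrivial A] [Group G] [Finite G] [Fintype ι] (φ : G →* A) {a : ι → k}
    (ha : ∀ i, IsIntegral ℤ (a i)) (x : ι → G) {c : k}
    (hc : algebraMap k A c = ∑ i, a i • φ (x i)) : IsIntegral ℤ c := by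
  let z : MonoidAlgebra (integralClosure ℤ k) G := ∑ i, .single (x i) ⟨a i, ha i⟩
  have lift_z : MonoidAlgebra.lift (integralClosure ℤ k) A G φ z = algebraMap k A c := by
    rw [map_sum, hc]
    exact Finset.sum_congr rfl fun i _ ↦ MonoidAlgebra.lift_single ..
  have integral_z : IsIntegral (integralClosure ℤ k) z := Algebra.IsIntegral.isIntegral z
  have := integral_z.map (MonoidAlgebra.lift (integralClosure ℤ k) A G φ)
  rw [lift_z, isIntegral_algebraMap_iff (algebraMap k A).injective] at this
  exact isIntegral_trans _ this

theorem sum_eq_card_nsmul_sum_quotient_out {G A : Type*} [Group G] [Fintype G] [AddCommMonoid A]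
    (K : Subgroup G) {F : G → A} (hF : ∀ g, ∀ x ∈ K, F (g * x) = F g) :
    ∑ g, F g = Nat.card K • ∑ q : G ⧸ K, F q.out := by
  have bijective : Function.Bijective fun p : (G ⧸ K) × K ↦ p.1.out * (p.2 : G) := by
    refine ⟨fun p q h ↦ ?_, fun g ↦ ?_⟩
    · have fst_eq : p.1 = q.1 := by
        simpa [QuotientGroup.mk_mul_of_mem] using congrArg (QuotientGroup.mk : G → G ⧸ K) h
      exact Prod.ext fst_eq (by simpa [fst_eq] using h)
    · obtain ⟨x, hx⟩ := QuotientGroup.mk_out_eq_mul K g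
      exact ⟨(g, x⁻¹), by simp [hx]⟩
  rw [← bijective.sum_comp, Fintype.sum_prod_type, Finset.smul_sum]
  refine Finset.sum_congr rfl fun q _ ↦ ?_
  rw [Finset.sum_congr rfl fun (x : K) _ ↦ hF q.out x x.2]
  simp

theorem fst_unimodularCover_surjective {k G V : Type*} [Field k] [IsAlgClosed k] [Group G]
    [AddCommGroup V] [Module k V] [FiniteDimensional k V] [Nontrivial V]
    (ρ : Representation k G V) :
    Function.Surjective ((MonoidHom.fst G kˣ).comp (unimodularCover ρ).subtype) := by
  intro g
  have det_ne_zero : LinearMap.det (ρ g) ≠ 0 :=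
    ((Group.isUnit g).map ρ |>.map LinearMap.det).ne_zero
  obtain ⟨c, hc⟩ := IsAlgClosed.exists_pow_nat_eq (LinearMap.det (ρ g))⁻¹
    (finrank_pos (R := k) (M := V))
  have c_ne_zero : c ≠ 0 := by
    rintro rfl
    rw [zero_pow finrank_pos.ne'] at hc
    exact inv_ne_zero det_ne_zero hc.symm
  refine ⟨⟨(g, Units.mk0 c c_ne_zero), ?_⟩, rfl⟩
  change LinearMap.det (c • ρ g) = 1
  rw [LinearMap.det_smul, hc, inv_mul_cancel₀ det_ne_zero]

variable {k G V : Type*} [Field k] [Group G] [AddCommGroup V] [Module k V]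
  (ρ : Representation k G V)

theorem character_inv_smul_mul_of_eq_smul {x : G} {c : k} (hx : ρ x = c • 1) (g : G) :
    ρ.character (g * x)⁻¹ • ρ (g * x) = ρ.character g⁻¹ • ρ g := by
  have smul_inv : c • ρ x⁻¹ = 1 := by
    rw [← mul_one (ρ x⁻¹), ← mul_smul_comm, ← hx, ← map_mul, inv_mul_cancel, map_one]
  have mul_character : c * ρ.character (g * x)⁻¹ = ρ.character g⁻¹ := by
    rw [mul_inv_rev, character, character, ← smul_eq_mul, ← map_smul (LinearMap.trace k V), map_mul,
      ← smul_mul_assoc, smul_inv, one_mul]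
  rw [map_mul, hx, mul_smul_comm, mul_one, smul_smul, mul_comm, mul_character]

variable [IsAlgClosed k] [CharZero k] [FiniteDimensional k V]

theorem finrank_smul_sum_character_inv_smul [Fintype G] [IsIrreducible ρ] :
    (finrank k V : k) • ∑ g, ρ.character g⁻¹ • ρ g = (Nat.card G : k) • 1 := by
  have card_ne_zero : (Nat.card G : k) ≠ 0 := Nat.cast_ne_zero.2 Nat.card_pos.ne'
  have := invertibleOfNonzero card_ne_zero
  obtain ⟨c, hc⟩ := exists_eq_smul_of_commute ρ (f := ∑ g, ρ.character g⁻¹ • ρ g) fun y ↦ by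
    rw [commute_iff_eq, Finset.sum_mul, Finset.mul_sum,
      ← (MulAut.conj y).toEquiv.sum_comp fun g ↦ ρ.character g⁻¹ • ρ g * ρ y]
    refine Finset.sum_congr rfl fun g _ ↦ ?_
    have character_conj : ρ.character (y * g * y⁻¹)⁻¹ = ρ.character g⁻¹ := by
      rw [conj_inv, char_conj]
    simp [-mul_inv_rev, character_conj, ← map_mul]
  have trace_eq : ∑ g, ρ.character g * ρ.character g⁻¹ = c * finrank k V := by
    simpa [character, mul_comm] using congrArg (LinearMap.trace k V) hc
  have orthogonality := card_inv_mul_sum_char_mul_char_eq_finrank ρ ρ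
  rw [IsIrreducible.finrank_intertwiningMap_self, Nat.cast_one, inv_mul_eq_one₀ card_ne_zero,
    trace_eq] at orthogonality
  rw [hc, smul_smul, orthogonality, mul_comm]

theorem finrank_dvd_index_of_finite [Finite G] [IsIrreducible ρ] (K : Subgroup G)
    (hK : ∀ x ∈ K, ∃ c : k, ρ x = c • 1) : finrank k V ∣ K.index := by
  have := Fintype.ofFinite G
  have := nontrivial_of_isIrreducible ρ
  have finrank_ne_zero : (finrank k V : k) ≠ 0 := Nat.cast_ne_zero.2 finrank_pos.ne'
  let S : End k V := ∑ q : G ⧸ K, ρ.character q.out⁻¹ • ρ q.out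
  have sum_eq : ∑ g, ρ.character g⁻¹ • ρ g = (Nat.card K : k) • S := by
    rw [Nat.cast_smul_eq_nsmul]
    refine sum_eq_card_nsmul_sum_quotient_out K fun g x hx ↦ ?_
    obtain ⟨c, hc⟩ := hK x hx
    exact character_inv_smul_mul_of_eq_smul ρ hc g
  have smul_S : (finrank k V : k) • S = (K.index : k) • 1 := by
    have := finrank_smul_sum_character_inv_smul ρ
    rwa [sum_eq, smul_comm, ← K.card_mul_index, Nat.cast_mul, mul_smul, smul_right_inj] at this
    exact Nat.cast_ne_zero.2 Nat.card_pos.ne'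
  refine natCast_dvd_of_isIntegral_of_mul_eq (c := (K.index / finrank k V : k)) ?_
    (div_mul_cancel₀ _ finrank_ne_zero)
  refine isIntegral_of_algebraMap_eq_sum_smul ρ
    (fun q : G ⧸ K ↦ isIntegral_character ρ (isOfFinOrder_of_finite q.out⁻¹)) (·.out) ?_
  rw [Algebra.algebraMap_eq_smul_one, div_eq_inv_mul, mul_smul, ← smul_S,
    inv_smul_smul₀ finrank_ne_zero]

theorem finrank_dvd_index_of_finite_image [IsIrreducible ρ] (K : Subgroup G) [K.FiniteIndex]
    (hK : ∀ x ∈ K, ∃ c : k, ρ x = c • 1) (finite_image : (ρ '' K).Finite) :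
    finrank k V ∣ K.index := by
  let φ : G →* (asGroupHom ρ).range := (asGroupHom ρ).rangeRestrict
  have φ_surjective : Function.Surjective φ := (asGroupHom ρ).rangeRestrict_surjective
  let τ : Representation k (asGroupHom ρ).range V :=
    (Units.coeHom (End k V)).comp (asGroupHom ρ).range.subtype
  have τ_φ (g : G) : τ (φ g) = ρ g := rfl
  have τ_injective : Function.Injective τ :=
    Units.val_injective.comp Subtype.val_injective
  have : Finite (K.map φ) := by
    refine Set.Finite.of_finite_image (f := τ) ?_ τ_injective.injOn
    rwa [Subgroup.coe_map, Set.image_image]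
  have : (K.map φ).FiniteIndex :=
    ⟨fun h ↦ K.index_ne_zero_of_finite (zero_dvd_iff.1 (h ▸ K.index_map_dvd φ_surjective))⟩
  have : Finite (asGroupHom ρ).range :=
    Subgroup.finite_iff_finite_and_finiteIndex (K.map φ) |>.2 ⟨‹_›, ‹_›⟩
  have : IsIrreducible τ :=
    isIrreducible_of_forall_eq_smul ρ fun g ↦ ⟨1, φ g, by rw [one_smul, τ_φ]⟩
  refine (finrank_dvd_index_of_finite τ (K.map φ) ?_).trans (K.index_map_dvd φ_surjective)
  rintro _ ⟨x, hx, rfl⟩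
  exact hK x hx

theorem finrank_dvd_index [IsIrreducible ρ] (K : Subgroup G)
    (hK : ∀ x ∈ K, ∃ c : k, ρ x = c • 1) : finrank k V ∣ K.index := by
  have := nontrivial_of_isIrreducible ρ
  let τ : Representation k (unimodularCover ρ) V :=
    (scaledRep ρ).comp (unimodularCover ρ).subtype
  let π := (MonoidHom.fst G kˣ).comp (unimodularCover ρ).subtype
  have π_surjective : Function.Surjective π := fst_unimodularCover_surjective ρ
  rw [← K.index_comap_of_surjective π_surjective]
  obtain index_eq | index_ne := eq_or_ne (K.comap π).index 0
  · exact index_eq ▸ dvd_zero _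
  have : (K.comap π).FiniteIndex := ⟨index_ne⟩
  have : IsIrreducible τ := isIrreducible_of_forall_eq_smul ρ fun g ↦ by
    obtain ⟨x, rfl⟩ := π_surjective g
    exact ⟨((x.1.2⁻¹ : kˣ) : k), x, (inv_smul_smul x.1.2 _).symm⟩
  have exists_eq_smul (x) (hx : x ∈ K.comap π) :
      ∃ c ∈ Polynomial.nthRootsFinset (finrank k V) (1 : k), τ x = c • 1 := by
    obtain ⟨c, hc⟩ := hK (π x) hx
    have τ_eq : τ x = (x.1.2 * c) • 1 := by rw [mul_smul, ← hc]; rfl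
    refine ⟨_, (Polynomial.mem_nthRootsFinset finrank_pos _).2 ?_, τ_eq⟩
    have det_eq : LinearMap.det (τ x) = 1 := x.2
    rwa [τ_eq, LinearMap.det_smul, map_one, mul_one] at det_eq
  refine finrank_dvd_index_of_finite_image τ _ (fun x hx ↦ ?_) ?_
  · obtain ⟨c, -, hc⟩ := exists_eq_smul x hx
    exact ⟨c, hc⟩
  · refine ((Polynomial.nthRootsFinset (finrank k V) (1 : k)).finite_toSet.image
      fun c ↦ c • (1 : End k V)).subset ?_
    rintro _ ⟨x, hx, rfl⟩
    obtain ⟨c, hc, eq⟩ := exists_eq_smul x hx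
    exact ⟨c, hc, eq.symm⟩

end ScalarSubgroup

section SimpleModules

variable {k R M ι : Type*} [Field k] [IsAlgClosed k] [Ring R] [Algebra k R] [AddCommGroup M]
  [Module k M] [Module R M] [IsScalarTower k R M] [Fintype ι] (S : ι → Type*)
  [∀ i, AddCommGroup (S i)] [∀ i, Module k (S i)] [∀ i, Module R (S i)]
  [∀ i, IsScalarTower k R (S i)] [∀ i, FiniteDimensional k (S i)] [∀ i, IsSimpleModule R (S i)]

theorem sum_comp_proj_injective_of_linearIndependent {J : ι → Type*} [∀ i, Fintype (J i)]
    (hS : ∀ i j, Nonempty (S i ≃ₗ[R] S j) → i = j) {f : ∀ i, J i → S i →ₗ[R] M}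
    (hf : ∀ i, LinearIndependent k (f i)) :
    Function.Injective
      (∑ p : Σ i, J i, f p.1 p.2 ∘ₗ LinearMap.proj p :
        ((p : Σ i, J i) → S p.1) →ₗ[R] M) := by
  -- Each coordinate of a simple submodule `T` of the kernel is zero or an isomorphism. The nonzero
  -- ones have the same target `S i` and differ by scalars, which gives a linear relation on `f i`.
  rw [← LinearMap.ker_eq_bot]
  refine (IsSemisimpleModule.eq_bot_or_exists_simple_le _).resolve_right ?_
  rintro ⟨T, T_le_ker, T_simple⟩
  let π (p : Σ i, J i) : T →ₗ[R] S p.1 := LinearMap.proj p ∘ₗ T.subtype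
  have sum_f_π (t : T) : ∑ i, ∑ j, f i j (π ⟨i, j⟩ t) = 0 := by
    rw [← Fintype.sum_sigma' fun i j ↦ f i j (π ⟨i, j⟩ t)]
    exact (LinearMap.sum_apply ..).symm.trans (T_le_ker t.2)
  obtain ⟨t₀, ht₀, t₀_ne_zero⟩ := T.ne_bot_iff.1 (isSimpleModule_iff_isAtom.1 T_simple).1
  obtain ⟨⟨i, j⟩, t₀_apply_ne_zero⟩ := Function.ne_iff.1 t₀_ne_zero
  have π_bijective : Function.Bijective (π ⟨i, j⟩) :=
    (LinearMap.bijective_or_eq_zero _).resolve_right fun h ↦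
      t₀_apply_ne_zero (LinearMap.congr_fun h ⟨t₀, ht₀⟩)
  let e : T ≃ₗ[R] S i := .ofBijective _ π_bijective
  have π_eq_zero (i') (hi' : i' ≠ i) (j') : π ⟨i', j'⟩ = 0 :=
    (LinearMap.bijective_or_eq_zero _).resolve_left fun bijective ↦
      hi' (hS _ _ ⟨(LinearEquiv.ofBijective _ bijective).symm.trans e⟩)
  choose c hc using fun j' ↦
    (IsSimpleModule.algebraMap_end_bijective_of_isAlgClosed k).2 (π ⟨i, j'⟩ ∘ₗ e.symm.toLinearMap)
  have π_e_symm (j' s) : π ⟨i, j'⟩ (e.symm s) = c j' • s := (LinearMap.congr_fun (hc j') s).symm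
  have sum_eq_zero : ∑ j', c j' • f i j' = 0 := by
    ext s
    rw [LinearMap.zero_apply, ← sum_f_π (e.symm s), Fintype.sum_eq_single i]
    · rw [LinearMap.sum_apply]
      refine Finset.sum_congr rfl fun j' _ ↦ ?_
      rw [π_e_symm, LinearMap.smul_apply, LinearMap.map_smul_of_tower]
    · simp +contextual [π_eq_zero]
  have c_eq_zero : c j = 0 := Fintype.linearIndependent_iff.1 (hf i) c sum_eq_zero j
  refine t₀_apply_ne_zero ?_
  have := π_e_symm j (e ⟨t₀, ht₀⟩)
  rwa [e.symm_apply_apply, c_eq_zero, zero_smul] at this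

theorem sum_finrank_linearMap_mul_finrank_le [FiniteDimensional k M]
    (hS : ∀ i j, Nonempty (S i ≃ₗ[R] S j) → i = j) :
    ∑ i, finrank k (S i →ₗ[R] M) * finrank k (S i) ≤ finrank k M := by
  have (i : ι) : FiniteDimensional k (S i →ₗ[R] M) :=
    .of_injective (LinearMap.restrictScalarsₗ k R (S i) M k) (LinearMap.restrictScalars_injective k)
  have := LinearMap.finrank_le_finrank_of_injective (R := k) (f := LinearMap.restrictScalars k _) <|
    sum_comp_proj_injective_of_linearIndependent (k := k) S hS fun i ↦
      (finBasis k (S i →ₗ[R] M)).linearIndependent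
  rw [finrank_pi_fintype, Fintype.sum_sigma] at this
  change ∑ i, ∑ _ : Fin (finrank k (S i →ₗ[R] M)), finrank k (S i) ≤ _ at this
  simpa using this

end SimpleModules

section MultiplicitySpace

variable {k G V W : Type*} [CommRing k] [Group G] {N : Subgroup G} [N.Normal] [AddCommGroup V]
  [Module k V] [AddCommGroup W] [Module k W]

/-- The restriction of a representation to a subgroup. -/
abbrev restrictRep (ρ : Representation k G V) (N : Subgroup G) : Representation k N V :=
  MonoidHom.comp ρ N.subtype

/-- The conjugate by `g` of a representation `ψ` of a normal subgroup: `n ↦ ψ (g⁻¹ * n * g)`. -/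
abbrev conjugateRep (ψ : Representation k N W) (g : G) : Representation k N W :=
  MonoidHom.comp ψ (MulAut.conjNormal g⁻¹ : MulAut N).toMonoidHom

/-- The pairs `(g, A)` of a group element and an isomorphism `A` from `ψ` to `n ↦ ψ (g * n * g⁻¹)`.
These pairs act on `W` through `A`, whereas the inertia group acts on `W` only projectively. -/
def inertiaCover (ψ : Representation k N W) : Subgroup (G × (W ≃ₗ[k] W)) where
  carrier := {p | ∀ n w, p.2 (ψ n w) = ψ (MulAut.conjNormal p.1 n) (p.2 w)}
  one_mem' := by simp
  mul_mem' {p q} hp hq n w := by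
    rw [Prod.snd_mul, Prod.fst_mul, LinearEquiv.mul_apply, hq, hp, map_mul]
    rfl
  inv_mem' {p} hp n w := by
    refine p.2.injective ?_
    change p.2 (p.2.symm _) = p.2 (ψ _ (p.2.symm w))
    rw [hp, p.2.apply_symm_apply, p.2.apply_symm_apply, ← MulAut.mul_apply, ← map_mul]
    simp

/-- The inertia group of `ψ`: the elements of `G` whose conjugation action fixes `ψ` up to
isomorphism. -/
def inertiaGroup (ψ : Representation k N W) : Subgroup G :=
  (inertiaCover ψ).map (MonoidHom.fst _ _)

theorem mem_inertiaGroup {ψ : Representation k N W} {g : G} :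
    g ∈ inertiaGroup ψ ↔
      ∃ A : W ≃ₗ[k] W, ∀ n w, A (ψ n w) = ψ (MulAut.conjNormal g n) (A w) := by
  simp [inertiaGroup, inertiaCover]

theorem le_inertiaGroup (ψ : Representation k N W) : N ≤ inertiaGroup ψ := by
  refine fun m hm ↦ mem_inertiaGroup.2
    ⟨.ofBijective (ψ ⟨m, hm⟩) (ψ.apply_bijective _), fun n w ↦ ?_⟩
  simp only [LinearEquiv.ofBijective_apply, ← End.mul_apply, ← map_mul]
  congr 2
  ext
  simp

theorem inv_mul_mem_inertiaGroup_of_equiv {ψ : Representation k N W} {x y : G}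
    (e : (conjugateRep ψ x).Equiv (conjugateRep ψ y)) : x⁻¹ * y ∈ inertiaGroup ψ := by
  refine mem_inertiaGroup.2 ⟨e.symm.toLinearEquiv, fun n w ↦ ?_⟩
  have := LinearMap.congr_fun (e.symm.isIntertwining' (MulAut.conjNormal y n)) w
  simp only [MonoidHom.coe_comp, map_inv, MulEquiv.toMonoidHom_eq_coe, MonoidHom.coe_coe,
    MulAut.coe_inv, Function.comp_apply, MulEquiv.symm_apply_apply, LinearMap.coe_comp,
    IntertwiningMap.coe_toLinearMap, Equiv.coe_toIntertwiningMap] at this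
  rw [map_mul, map_inv]
  exact this

/-- The action of the inertia cover of `ψ` on the multiplicity space of `ψ` in `ρ`,
given by `f ↦ ρ g ∘ f ∘ A⁻¹` for the pair `(g, A)`. -/
def multiplicityRep (ρ : Representation k G V) (ψ : Representation k N W) :
    Representation k (inertiaCover ψ) (IntertwiningMap ψ (restrictRep ρ N)) where
  toFun p :=
    { toFun f := ⟨ρ p.1.1 ∘ₗ f.toLinearMap ∘ₗ (p⁻¹).1.2.toLinearMap, fun n ↦ by
        ext w
        have inv_apply := (p⁻¹).2 n w
        simp only [InvMemClass.coe_inv, Prod.snd_inv, LinearEquiv.coe_inv, Prod.fst_inv, map_inv,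
          MulAut.inv_apply] at inv_apply
        simp [inv_apply, f.isIntertwining]⟩
      map_add' f f' := by ext; simp
      map_smul' c f := by ext; simp }
  map_one' := by ext; simp
  map_mul' p q := by ext; simp

theorem multiplicityRep_apply_apply (ρ : Representation k G V) (ψ : Representation k N W)
    (p : inertiaCover ψ) (f : IntertwiningMap ψ (restrictRep ρ N)) (w : W) :
    multiplicityRep ρ ψ p f w = ρ p.1.1 (f ((p⁻¹).1.2 w)) := rfl

/-- Translation by `g` identifies the multiplicity spaces of `ψ` and of its conjugate by `g`. -/
def intertwiningMapConjugateRepEquiv (ρ : Representation k G V) (ψ : Representation k N W) (g : G) :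
    IntertwiningMap (conjugateRep ψ g) (restrictRep ρ N) ≃ₗ[k]
      IntertwiningMap ψ (restrictRep ρ N) where
  toFun f := ⟨ρ g⁻¹ ∘ₗ f.toLinearMap, fun n ↦ by
    ext w
    have := LinearMap.congr_fun (f.isIntertwining' (MulAut.conjNormal g n)) w
    simp only [MonoidHom.coe_comp, map_inv, MulEquiv.toMonoidHom_eq_coe, MonoidHom.coe_coe,
      MulAut.coe_inv, Function.comp_apply, MulEquiv.symm_apply_apply, Subgroup.coe_subtype,
      MulAut.conjNormal_apply, map_mul, LinearMap.coe_comp, IntertwiningMap.coe_toLinearMap,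
      End.mul_apply] at this ⊢
    rw [this, inv_self_apply]⟩
  invFun f := ⟨ρ g ∘ₗ f.toLinearMap, fun n ↦ by
    ext w
    simp [f.isIntertwining]⟩
  map_add' f f' := by ext; simp
  map_smul' c f := by ext; simp
  left_inv f := by ext; simp
  right_inv f := by ext; simp

end MultiplicitySpace

section CliffordTheory

theorem finrank_le_index_mul_finrank_of_invariant {k G V : Type*} [Field k] [Group G]
    [AddCommGroup V] [Module k V] [FiniteDimensional k V] (ρ : Representation k G V)
    [IsIrreducible ρ] (H : Subgroup G) [H.FiniteIndex] {Y : Submodule k V} (ne_bot : Y ≠ ⊥)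
    (invariant : ∀ h ∈ H, ∀ y ∈ Y, ρ h y ∈ Y) : finrank k V ≤ H.index * finrank k Y := by
  have := nontrivial_of_isIrreducible ρ
  have := Fintype.ofFinite (G ⧸ H)
  let Φ : (G ⧸ H → Y) →ₗ[k] V := ∑ x, ρ x.out ∘ₗ Y.subtype ∘ₗ LinearMap.proj x
  have Φ_apply (y) : Φ y = ∑ x, ρ x.out (y x) := by simp [Φ]
  have apply_mem_range (g) (y) (hy : y ∈ Y) : ρ g y ∈ LinearMap.range Φ := by
    obtain ⟨h, hh⟩ := QuotientGroup.mk_out_eq_mul H g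
    refine ⟨Pi.single g ⟨ρ (h⁻¹ : H) y, invariant _ (h⁻¹).2 y hy⟩, ?_⟩
    rw [Φ_apply, Fintype.sum_eq_single (g : G ⧸ H) fun x hx ↦ by simp [Pi.single_eq_of_ne hx],
      Pi.single_eq_same, hh, ← End.mul_apply, ← map_mul]
    simp
  have range_eq_top : LinearMap.range Φ = ⊤ := by
    refine isIrreducible_iff_forall_invariant.1 ‹IsIrreducible ρ› _ ?_ ?_
    · rintro g _ ⟨y, rfl⟩
      rw [Φ_apply, map_sum]
      refine Submodule.sum_mem _ fun x _ ↦ ?_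
      rw [← End.mul_apply, ← map_mul]
      exact apply_mem_range _ _ (y x).2
    · refine fun h ↦ ne_bot (eq_bot_iff.2 (h ▸ fun y hy ↦ ?_))
      simpa using apply_mem_range 1 y hy
  have := LinearMap.finrank_range_le Φ
  rwa [range_eq_top, finrank_top, finrank_pi_fintype, Finset.sum_const, Finset.card_univ,
    ← Nat.card_eq_fintype_card, smul_eq_mul] at this

variable {k G V W : Type*} [Field k] [Group G] {N : Subgroup G} [N.Normal] [AddCommGroup V]
  [Module k V] [AddCommGroup W] [Module k W] [FiniteDimensional k W]
  (ρ : Representation k G V) (ψ : Representation k N W)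

theorem exists_eq_smul_multiplicityRep [IsAlgClosed k] [IsIrreducible ψ] {p : inertiaCover ψ}
    (hp : p.1.1 ∈ N) : ∃ c : k, multiplicityRep ρ ψ p = c • 1 := by
  have commute (n : N) :
      Commute (ψ ⟨p.1.1, hp⟩ ∘ₗ (p⁻¹).1.2.toLinearMap) (ψ n) := by
    ext w
    have inv_apply : (p⁻¹).1.2 (ψ n w) = _ := (p⁻¹).2 n w
    simp only [End.mul_apply, LinearMap.comp_apply, LinearEquiv.coe_coe]
    rw [inv_apply, ← End.mul_apply, ← End.mul_apply, ← map_mul, ← map_mul]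
    congr 2
    ext
    simp [mul_assoc]
  obtain ⟨c, hc⟩ := exists_eq_smul_of_commute ψ commute
  refine ⟨c, LinearMap.ext fun f ↦ IntertwiningMap.ext (LinearMap.ext fun w ↦ ?_)⟩
  calc multiplicityRep ρ ψ p f w = ρ p.1.1 (f ((p⁻¹).1.2 w)) := rfl
    _ = f (ψ ⟨p.1.1, hp⟩ ((p⁻¹).1.2 w)) := (f.isIntertwining _ _ ⟨p.1.1, hp⟩ _).symm
    _ = f (c • w) := congrArg f (LinearMap.congr_fun hc w)
    _ = c • f w := f.toLinearMap.map_smul c w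

variable [FiniteDimensional k V]

theorem index_inertiaGroup_mul_le_finrank [IsAlgClosed k] [N.FiniteIndex] [IsIrreducible ψ] :
    (inertiaGroup ψ).index * (finrank k (IntertwiningMap ψ (restrictRep ρ N)) * finrank k W) ≤
      finrank k V := by
  have := Subgroup.finiteIndex_of_le (le_inertiaGroup ψ)
  have := Fintype.ofFinite (G ⧸ inertiaGroup ψ)
  let S (x : G ⧸ inertiaGroup ψ) : Representation k N W := conjugateRep ψ x.out
  have irreducible (x) : IsIrreducible (S x) := isIrreducible_of_forall_eq_smul ψ fun n ↦
    ⟨1, MulAut.conjNormal x.out n, by simp [S]⟩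
  have eq_of_equiv (x y)
      (e : Nonempty ((S x).asModule ≃ₗ[MonoidAlgebra k N] (S y).asModule)) : x = y := by
    obtain ⟨e⟩ := e
    rw [← x.out_eq', ← y.out_eq']
    exact QuotientGroup.eq.2 (inv_mul_mem_inertiaGroup_of_equiv (.mk (e.restrictScalars k)
      ((IntertwiningMap.equivLinearMapAsModule _ _).symm e.toLinearMap).isIntertwining'))
  have finrank_hom (x) :
      finrank k ((S x).asModule →ₗ[MonoidAlgebra k N] (restrictRep ρ N).asModule) =
        finrank k (IntertwiningMap ψ (restrictRep ρ N)) :=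
    (IntertwiningMap.equivLinearMapAsModule _ _).finrank_eq.symm.trans
      (intertwiningMapConjugateRepEquiv ρ ψ x.out).finrank_eq
  have : FiniteDimensional k (restrictRep ρ N).asModule := inferInstanceAs (FiniteDimensional k V)
  have := sum_finrank_linearMap_mul_finrank_le (k := k) (R := MonoidAlgebra k N)
    (M := (restrictRep ρ N).asModule) (fun x ↦ (S x).asModule) eq_of_equiv
  simp only [finrank_hom] at this
  change ∑ _ : G ⧸ inertiaGroup ψ, _ * finrank k W ≤ finrank k V at this
  rwa [Finset.sum_const, Finset.card_univ, ← Nat.card_eq_fintype_card, smul_eq_mul] at this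

theorem finrank_le_index_inertiaGroup_mul [N.FiniteIndex] [IsIrreducible ρ]
    {X : Submodule k (IntertwiningMap ψ (restrictRep ρ N))} (ne_bot : X ≠ ⊥)
    (invariant : ∀ p, ∀ f ∈ X, multiplicityRep ρ ψ p f ∈ X) :
    finrank k V ≤ (inertiaGroup ψ).index * (finrank k X * finrank k W) := by
  have := Subgroup.finiteIndex_of_le (le_inertiaGroup ψ)
  let eval : TensorProduct k X W →ₗ[k] V :=
    TensorProduct.lift (IntertwiningMap.toLinearMapl ψ (restrictRep ρ N) ∘ₗ X.subtype)
  have apply_mem_range {f} (hf : f ∈ X) (w : W) : f w ∈ LinearMap.range eval :=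
    ⟨⟨f, hf⟩ ⊗ₜ w, rfl⟩
  have range_ne_bot : LinearMap.range eval ≠ ⊥ := fun range_eq_bot ↦ by
    refine ne_bot (X.eq_bot_iff.2 fun f hf ↦ IntertwiningMap.ext (LinearMap.ext fun w ↦ ?_))
    exact (LinearMap.range eval).eq_bot_iff.1 range_eq_bot _ (apply_mem_range hf w)
  have range_invariant : ∀ g ∈ inertiaGroup ψ, ∀ v ∈ LinearMap.range eval,
      ρ g v ∈ LinearMap.range eval := by
    rintro _ ⟨p, hp, rfl⟩ _ ⟨t, rfl⟩
    induction t with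
    | zero => simp
    | add s t hs ht => simpa only [map_add] using add_mem hs ht
    | tmul f w =>
      have := apply_mem_range (invariant ⟨p, hp⟩ f f.2) (p.2 w)
      have inv_apply : (⟨p, hp⟩⁻¹ : inertiaCover ψ).1.2 (p.2 w) = w := p.2.symm_apply_apply w
      rwa [multiplicityRep_apply_apply, inv_apply] at this
  calc finrank k V ≤ (inertiaGroup ψ).index * finrank k (LinearMap.range eval) :=
        finrank_le_index_mul_finrank_of_invariant ρ _ range_ne_bot range_invariant
    _ ≤ (inertiaGroup ψ).index * (finrank k X * finrank k W) :=
        Nat.mul_le_mul_left _ ((LinearMap.finrank_range_le _).trans_eq (finrank_tensorProduct ..))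

theorem finrank_eq_index_inertiaGroup_mul [IsAlgClosed k] [N.FiniteIndex] [IsIrreducible ρ]
    [IsIrreducible ψ] [Nontrivial (IntertwiningMap ψ (restrictRep ρ N))] :
    finrank k V =
      (inertiaGroup ψ).index * (finrank k (IntertwiningMap ψ (restrictRep ρ N)) * finrank k W) := by
  refine le_antisymm ?_ (index_inertiaGroup_mul_le_finrank ρ ψ)
  simpa only [finrank_top] using
    finrank_le_index_inertiaGroup_mul ρ ψ (X := ⊤) top_ne_bot fun _ _ _ ↦ Submodule.mem_top

theorem isIrreducible_multiplicityRep [IsAlgClosed k] [N.FiniteIndex] [IsIrreducible ρ]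
    [IsIrreducible ψ] [Nontrivial (IntertwiningMap ψ (restrictRep ρ N))] :
    IsIrreducible (multiplicityRep ρ ψ) := by
  have := nontrivial_of_isIrreducible ψ
  have := Subgroup.finiteIndex_of_le (le_inertiaGroup ψ)
  refine isIrreducible_iff_forall_invariant.2 fun X invariant ne_bot ↦ ?_
  have := (index_inertiaGroup_mul_le_finrank ρ ψ).trans
    (finrank_le_index_inertiaGroup_mul ρ ψ ne_bot invariant)
  have := Nat.le_of_mul_le_mul_left this (Nat.pos_of_ne_zero Subgroup.FiniteIndex.index_ne_zero)
  exact Submodule.eq_top_of_finrank_eq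
    (X.finrank_le.antisymm (Nat.le_of_mul_le_mul_right this finrank_pos))

theorem stmt_13_general [IsAlgClosed k] [CharZero k] [N.FiniteIndex] [IsIrreducible ρ]
    [IsIrreducible ψ] (h : ∃ f : IntertwiningMap ψ (restrictRep ρ N), f ≠ 0) :
    ∃ m : ℕ, finrank k V = m * finrank k W ∧ m ∣ N.index := by
  have := (nontrivial_iff_exists_ne 0).2 h
  have := isIrreducible_multiplicityRep ρ ψ
  refine ⟨(inertiaGroup ψ).index * finrank k (IntertwiningMap ψ (restrictRep ρ N)), ?_, ?_⟩
  · rw [mul_assoc, finrank_eq_index_inertiaGroup_mul ρ ψ]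
  · have := finrank_dvd_index (multiplicityRep ρ ψ)
      (N.comap ((MonoidHom.fst _ _).comp (inertiaCover ψ).subtype))
      fun p hp ↦ exists_eq_smul_multiplicityRep ρ ψ hp
    rw [Subgroup.index_comap, MonoidHom.range_comp, Subgroup.range_subtype] at this
    rw [← Subgroup.relIndex_mul_index (le_inertiaGroup ψ), mul_comm]
    exact mul_dvd_mul_right this _

end CliffordTheory

theorem card_inv_mul_sum_character_mul_conj {G V W : Type*} [Group G] [Fintype G]
    [AddCommGroup V] [Module ℂ V] [FiniteDimensional ℂ V] [AddCommGroup W] [Module ℂ W]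
    [FiniteDimensional ℂ W] (ρ : Representation ℂ G V) (ψ : Representation ℂ G W) :
    (Nat.card G : ℂ)⁻¹ * ∑ g, ρ.character g * starRingEnd ℂ (ψ.character g) =
      finrank ℂ (IntertwiningMap ψ ρ) := by
  have : Invertible (Nat.card G : ℂ) :=
    invertibleOfNonzero (Nat.cast_ne_zero.2 Nat.card_pos.ne')
  simp only [conj_character ψ (isOfFinOrder_of_finite _), card_inv_mul_sum_char_mul_char_eq_finrank]

section Simple

open CategoryTheory

theorem isIrreducible_of_simple {k G : Type*} [Field k] [Monoid G] (V : FDRep k G)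
    [Simple V] : IsIrreducible V.ρ := by
  have : Nontrivial V := by
    by_contra not_nontrivial
    rw [not_nontrivial_iff_subsingleton] at not_nontrivial
    refine id_nonzero V ?_
    ext v
    exact Subsingleton.elim (α := V) _ _
  refine isIrreducible_iff_forall_invariant.2 fun X invariant ne_bot ↦ ?_
  let X' : Subrepresentation V.ρ := ⟨X, fun g v ↦ invariant g v⟩
  let i : FDRep.of X'.toRepresentation ⟶ V :=
    ⟨FGModuleCat.ofHom X.subtype, fun g ↦ by ext; rfl⟩
  have : Mono i := ConcreteCategory.mono_of_injective i X.injective_subtype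
  have i_ne_zero : i ≠ 0 := fun h ↦ ne_bot <| (Submodule.eq_bot_iff _).2 fun v hv ↦
    congrArg (fun j : FDRep.of X'.toRepresentation ⟶ V ↦ j ⟨v, hv⟩) h
  have := isIso_of_mono_of_nonzero i_ne_zero
  refine Submodule.eq_top_iff'.2 fun v ↦ ?_
  obtain ⟨x, rfl⟩ := (ConcreteCategory.bijective_of_isIso i).2 v
  exact x.2

end Simple

end

/-- If `χ ∈ Irr(G)`, `N ⊴ G` and `ψ ∈ Irr(N)` is a constituent of the restriction of `χ`
to `N`, then `ψ(1)` divides `χ(1)` and `χ(1)/ψ(1)` divides the index `[G : N]`. -/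
theorem stmt_13 (G : Type) [Group G] [Fintype G] (N : Subgroup G) [N.Normal]
    (V : FDRep ℂ G) [CategoryTheory.Simple V] (W : FDRep ℂ N) [CategoryTheory.Simple W]
    (hconst : 0 <
      ((Nat.card N : ℂ)⁻¹ *
        ∑ n : N, V.character (n : G) * starRingEnd ℂ (W.character n)).re) :
    ∃ k : ℕ, Module.finrank ℂ V = k * Module.finrank ℂ W ∧ k ∣ N.index := by
  have := isIrreducible_of_simple V
  have := isIrreducible_of_simple W
  refine stmt_13_general V.ρ W.ρ ((Module.finrank_pos_iff_exists_ne_zero (R := ℂ)).1 ?_)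
  have inner_eq_finrank := card_inv_mul_sum_character_mul_conj (restrictRep V.ρ N) W.ρ
  exact Nat.cast_pos.1 (hconst.trans_eq (congrArg Complex.re inner_eq_finrank))
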